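/- arXiv:1503.07849 — 4 statements merged into one kernel-verified Lean document; each statement's English description precedes it below -/
import Mathlib

section
/- The coefficients of the Galois resolvent form a complete system of invariants: the invariant ring k[x₁,…,xₙ]^G is generated as a k-algebra by the finitely many polynomials G_{α,α₁,…,αₙ}(x), i.e. every G-invariant polynomial f ∈ k[x₁,…,xₙ] is a polynomial (with coefficients in k) in the coefficients of Φ(z,u). -/
/-!
The idea is to average and polarize. Since `f` is invariant and the characteristic is zero,
`f` is `1/|G|` times `∑_g g • f`, so by linearity it suffices to treat the orbit sums
`∑_g g • x^d = ∑_g ∏ i, (g • xᵢ) ^ dᵢ`.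

Let `L_g = ∑ i, uᵢ (g • xᵢ)`, so that `Φ = ∏_g (z + L_g)`, and let `B` be the algebra generated
by the coefficients of `Φ`. The coefficients of the powers of `z` in `Φ` are the elementary
symmetric polynomials in the `L_g`, and they are polynomials in `u` over `B`. By Newton's
identities (`sum_pow_mem_of_prod_coeff_mem`) so are the power sums `∑_g L_g ^ m`. The coefficient
of `u^d` in the power sum with `m = |d|` is a multinomial coefficient times the orbit sum of `x^d`
(`sum_prod_pow_mem`), and the multinomial coefficient is invertible in `k`.
-/

open MvPolynomial

/-- The action of an invertible matrix `g ∈ GL(n,k)` on the polynomial ring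
`k[x₁,…,xₙ]`, as the `k`-algebra endomorphism sending `xᵢ ↦ Σⱼ gᵢⱼ · xⱼ`. -/
noncomputable def glAct {k : Type*} [Field k] {n : ℕ}
    (g : GL (Fin n) k) :
    MvPolynomial (Fin n) k →ₐ[k] MvPolynomial (Fin n) k :=
  aeval fun i => ∑ j, C ((g : Matrix (Fin n) (Fin n) k) i j) * X j

/-- The Galois resolvent `Φ(z,u) = ∏_{g ∈ G} (z + u₁·(g•x₁) + ⋯ + uₙ·(g•xₙ))`,
a polynomial in the auxiliary variables `z = X none` and `uᵢ = X (some i)`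
with coefficients in `k[x₁,…,xₙ]`. -/
noncomputable def galoisResolvent {k : Type*} [Field k] {n : ℕ}
    (G : Subgroup (GL (Fin n) k)) [Fintype G] :
    MvPolynomial (Option (Fin n)) (MvPolynomial (Fin n) k) :=
  ∏ g : G, (X none + ∑ i, C (glAct (g : GL (Fin n) k) (X i)) * X (some i))

/-- A subring containing the coefficients of `∏ i, (X + L i)`, i.e. the elementary symmetric
expressions in the `L i`, contains their power sums. -/
theorem sum_pow_mem_of_prod_coeff_mem {S ι : Type*} [CommRing S] [Fintype ι]
    (T : Subring S) (L : ι → S)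
    (h : ∀ j, (∏ i, (Polynomial.X + Polynomial.C (L i))).coeff j ∈ T) (m : ℕ) :
    ∑ i, L i ^ m ∈ T := by
  have he : ∀ j, aeval L (esymm ι ℤ j) ∈ T := by
    intro j
    rcases le_or_gt j (Fintype.card ι) with hj | hj
    · have h1 := h (Fintype.card ι - j)
      rw [Finset.prod_X_add_C_coeff _ _ (by simp), Finset.card_univ, Nat.sub_sub_self hj] at h1
      simpa [esymm] using h1
    · have : esymm ι ℤ j = 0 := by
        rw [esymm, Finset.powersetCard_eq_empty.2 (by simpa using hj), Finset.sum_empty]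
      simp [this]
  have hp : ∀ m, aeval L (psum ι ℤ m) ∈ T := by
    intro m
    induction m using Nat.strong_induction_on with
    | _ m ih =>
      rcases Nat.eq_zero_or_pos m with rfl | hm
      · simp [psum]
      · rw [psum_eq_mul_esymm_sub_sum ι ℤ m hm]
        simp only [map_sub, map_mul, map_pow, map_neg, map_one, map_natCast, map_sum]
        refine T.sub_mem (T.mul_mem (T.mul_mem (T.pow_mem (T.neg_mem T.one_mem) _)
          (natCast_mem T m)) (he m)) (T.sum_mem fun a ha => ?_)
        rw [Finset.mem_filter, Finset.HasAntidiagonal.mem_antidiagonal, Set.mem_Ioo] at ha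
        exact T.mul_mem (T.mul_mem (T.pow_mem (T.neg_mem T.one_mem) _) (he _))
          (ih _ (by omega))
  simpa [psum] using hp m

/-- Polarization: if a `k`-subalgebra `B` contains the coefficients of `∏ g, (z + ∑ i, uᵢ y_{g,i})`,
then it contains the polarized power sums `∑ g, ∏ i, y_{g,i} ^ dᵢ`. -/
theorem sum_prod_pow_mem {k R ι : Type*} [Field k] [CharZero k] [CommRing R] [Algebra k R]
    [Fintype ι] {n : ℕ} (B : Subalgebra k R) (y : ι → Fin n → R)
    (h : ∀ d, coeff d (∏ g, (X none + ∑ i, C (y g i) * X (some i)) :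
      MvPolynomial (Option (Fin n)) R) ∈ B) (d : Fin n →₀ ℕ) :
    ∑ g, d.prod (fun i m => y g i ^ m) ∈ B := by
  -- polynomials in `u` all of whose coefficients lie in `B`
  let T : Subring (MvPolynomial (Fin n) R) := (MvPolynomial.map (B.val : B →+* R)).range
  have hT : ∀ p, p ∈ T ↔ ∀ e, coeff e p ∈ B := by
    intro p
    constructor
    · rintro ⟨q, rfl⟩ e
      rw [coeff_map]
      exact (coeff e q).2
    · intro hp
      refine mem_range_map_iff_coeffs_subset.2 fun c hc => ?_
      obtain ⟨e, -, rfl⟩ := mem_coeffs_iff.1 hc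
      exact ⟨⟨_, hp e⟩, rfl⟩
  have key := sum_pow_mem_of_prod_coeff_mem T (fun g => ∑ i, y g i • X i) (fun j => by
    rw [hT]
    intro e
    have h1 := h (e.optionElim j)
    rw [← optionEquivLeft_coeff_coeff] at h1
    simpa [smul_eq_C_mul] using h1) (d.sum fun _ m => m)
  have h2 := (hT _).1 key d
  simp only [coeff_sum, coeff_linearCombination_X_pow_of_fintype, if_true] at h2
  rw [← Finset.mul_sum] at h2
  have hd : (d.multinomial : k) ≠ 0 := by
    rw [Nat.cast_ne_zero, Finsupp.multinomial_eq]
    exact (Nat.multinomial_pos _ _).ne'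
  have h3 := B.smul_mem h2 (d.multinomial : k)⁻¹
  rwa [← nsmul_eq_mul, ← Nat.cast_smul_eq_nsmul k, smul_smul, inv_mul_cancel₀ hd, one_smul] at h3

/-- The coefficients of the Galois resolvent form a complete system of invariants:
every `G`-invariant polynomial `f ∈ k[x₁,…,xₙ]` lies in the `k`-subalgebra generated
by the coefficients `G_{α,α₁,…,αₙ}(x)` of `Φ(z,u)`. -/
theorem invariant_mem_adjoin_galoisResolvent_coeffs
    {k : Type*} [Field k] [CharZero k] {n : ℕ} (hn : 1 ≤ n)
    (G : Subgroup (GL (Fin n) k)) [Fintype G]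
    (f : MvPolynomial (Fin n) k) (hf : ∀ σ ∈ G, glAct σ f = f) :
    f ∈ Algebra.adjoin k
      {P : MvPolynomial (Fin n) k |
        ∃ d : Option (Fin n) →₀ ℕ, P = coeff d (galoisResolvent G)} := by
  set B := Algebra.adjoin k {P : MvPolynomial (Fin n) k |
    ∃ d : Option (Fin n) →₀ ℕ, P = coeff d (galoisResolvent G)}
  have hmono := sum_prod_pow_mem B (fun (g : G) i => glAct (g : GL (Fin n) k) (X i))
    (fun d => Algebra.subset_adjoin ⟨d, rfl⟩)
  have hsum : ∀ p : MvPolynomial (Fin n) k, ∑ g : G, glAct (g : GL (Fin n) k) p ∈ B := by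
    intro p
    induction p using MvPolynomial.induction_on' with
    | monomial d c =>
      have h1 : ∀ g : G, glAct (g : GL (Fin n) k) (monomial d c) =
          c • d.prod (fun i m => glAct (g : GL (Fin n) k) (X i) ^ m) := by
        intro g
        rw [monomial_eq, ← smul_eq_C_mul, map_smul, map_finsuppProd]
        simp only [map_pow]
      simp only [h1, ← Finset.smul_sum]
      exact B.smul_mem (hmono d) c
    | add p q hp hq =>
      simp only [map_add, Finset.sum_add_distrib]
      exact B.add_mem hp hq
  have hcard : (Fintype.card G : k) ≠ 0 := Nat.cast_ne_zero.2 Fintype.card_ne_zero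
  have h1 := B.smul_mem (hsum f) (Fintype.card G : k)⁻¹
  rwa [Finset.sum_congr rfl fun (g : G) _ => hf g g.2, Finset.sum_const, Finset.card_univ,
    ← Nat.cast_smul_eq_nsmul k, smul_smul, inv_mul_cancel₀ hcard, one_smul] at h1
end

section
/- Noether's theorem on orbit sums: the invariant ring k[x₁,…,xₙ]^G is generated as a k-algebra by the orbit sums J_μ = Σ_{g∈G} g•(x₁^{μ₁}···xₙ^{μₙ}) taken over all multi-exponents μ ∈ ℕⁿ with μ₁+⋯+μₙ ≤ h, where h is the order of the group; i.e. every G-invariant polynomial is a polynomial (with coefficients in k) in these finitely many orbit sums. -/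
/-!
The orbit sums are the values of the transfer map `Tr p = Σ_{g ∈ G} g • p` on monomials. An
invariant `f` satisfies `|G| • f = Tr f`, and `|G|` is invertible in `k`, so it suffices to show
that every `Tr (x^μ)` lies in the subalgebra `A` generated by the orbit sums of degree at most `|G|`.

This is done by strong induction on the degree of `x^μ`, with Benson's identity as the inductive
step. If the degree exceeds `|G|`, write `x^μ = m ∏_{σ ∈ G} y_σ` with `m` a monomial and each
`y_σ` a variable. For each `τ ∈ G`, the product `∏_σ (τ y_σ - σ y_σ)` vanishes because of its factor
at `σ = τ`. Expanding the product, multiplying by `τ m`, and summing over `τ` gives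
`Σ_{t ⊆ G} (-1)^|t| Tr (m ∏_{σ ∉ t} y_σ) ∏_{σ ∈ t} σ y_σ = 0`, and applying `Tr` once more gives
`|G| • Tr (x^μ) = - Σ_{t ≠ ∅} (-1)^|t| Tr (m ∏_{σ ∉ t} y_σ) Tr (∏_{σ ∈ t} σ y_σ)`
(`transfer_benson`). On the right, the first factors are orbit sums of smaller degree, and the second
ones are transfers of polynomials of degree at most `|t| ≤ |G|`, hence linear combinations of the
generators.
-/

open MvPolynomial

/-- The orbit sum `J_μ = Σ_{g ∈ G} g • (x₁^{μ₁} ⋯ xₙ^{μₙ})` of the monomial `x^μ`. -/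
noncomputable def orbitSum {k : Type*} [Field k] {n : ℕ}
    (G : Subgroup (GL (Fin n) k)) [Fintype G] (μ : Fin n →₀ ℕ) :
    MvPolynomial (Fin n) k :=
  ∑ σ : G, glAct (σ : GL (Fin n) k) (∏ i, X i ^ μ i)

section Noether

variable {k : Type*} [Field k] {n : ℕ}

/-- `glAct` composes contravariantly, since `glAct g` substitutes into the variables. -/
lemma glAct_glAct (g g' : GL (Fin n) k) (p : MvPolynomial (Fin n) k) :
    glAct g (glAct g' p) = glAct (g' * g) p := by
  have h : (glAct g).comp (glAct g') = glAct (g' * g) := by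
    apply MvPolynomial.algHom_ext
    intro i
    simp only [glAct, AlgHom.comp_apply, aeval_X, map_sum, map_mul, algHom_C,
      MvPolynomial.algebraMap_eq, Finset.mul_sum, Units.val_mul, Matrix.mul_apply,
      Finset.sum_mul, mul_assoc]
    exact Finset.sum_comm
  exact DFunLike.congr_fun h p

variable (G : Subgroup (GL (Fin n) k)) [Fintype G]

/-- The transfer `p ↦ Σ_{g ∈ G} g • p`, an unnormalised projection onto the invariants. -/
noncomputable def transfer : MvPolynomial (Fin n) k →ₗ[k] MvPolynomial (Fin n) k :=
  ∑ σ : G, (glAct (σ : GL (Fin n) k)).toLinearMap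

lemma transfer_apply (p : MvPolynomial (Fin n) k) :
    transfer G p = ∑ σ : G, glAct (σ : GL (Fin n) k) p := by
  simp [transfer]

lemma transfer_monomial (μ : Fin n →₀ ℕ) : transfer G (monomial μ 1) = orbitSum G μ := by
  rw [transfer_apply, orbitSum, monomial_eq, Finsupp.prod_fintype _ _ (by simp)]
  simp

lemma glAct_transfer (τ : G) (p : MvPolynomial (Fin n) k) :
    glAct (τ : GL (Fin n) k) (transfer G p) = transfer G p := by
  simp only [transfer_apply, map_sum, glAct_glAct]
  exact Fintype.sum_equiv (Equiv.mulRight τ) _ _ fun σ => by simp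

/-- The transfer is linear over the invariants. -/
lemma transfer_transfer_mul (p q : MvPolynomial (Fin n) k) :
    transfer G (transfer G p * q) = transfer G p * transfer G q := by
  rw [transfer_apply G (_ * _)]
  simp only [map_mul, glAct_transfer, ← Finset.mul_sum, ← transfer_apply]

lemma transfer_of_invariant (f : MvPolynomial (Fin n) k) (hf : ∀ σ ∈ G, glAct σ f = f) :
    transfer G f = (Fintype.card G : k) • f := by
  rw [transfer_apply, Finset.sum_congr rfl fun (σ : G) _ => hf (σ : GL (Fin n) k) σ.2]
  simp [Nat.cast_smul_eq_nsmul]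

/-- Benson's identity, obtained from `∏_σ (τ y_σ - σ y_σ) = 0` for every `τ ∈ G`. -/
lemma transfer_benson [DecidableEq G] (m : MvPolynomial (Fin n) k)
    (y : G → MvPolynomial (Fin n) k) :
    ∑ t ∈ (Finset.univ : Finset G).powerset,
      (-1 : MvPolynomial (Fin n) k) ^ t.card * (transfer G (m * ∏ σ ∈ Finset.univ \ t, y σ) *
        transfer G (∏ σ ∈ t, glAct (σ : GL (Fin n) k) (y σ))) = 0 := by
  have h1 : ∑ t ∈ (Finset.univ : Finset G).powerset,
      (-1 : k) ^ t.card • (transfer G (m * ∏ σ ∈ Finset.univ \ t, y σ) *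
        ∏ σ ∈ t, glAct (σ : GL (Fin n) k) (y σ)) = 0 := by
    have h0 : ∀ τ : G, glAct (τ : GL (Fin n) k) m *
        ∏ σ : G, (glAct (τ : GL (Fin n) k) (y σ) - glAct (σ : GL (Fin n) k) (y σ)) = 0 :=
      fun τ => by rw [Finset.prod_eq_zero (Finset.mem_univ τ) (sub_self _), mul_zero]
    rw [← Finset.sum_eq_zero fun τ (_ : τ ∈ Finset.univ) => h0 τ]
    simp only [Finset.prod_sub, Finset.mul_sum]
    rw [Finset.sum_comm]
    refine Finset.sum_congr rfl fun t _ => ?_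
    rw [transfer_apply, Finset.sum_mul, Finset.smul_sum]
    refine Finset.sum_congr rfl fun τ _ => ?_
    simp only [map_mul, map_prod, Algebra.smul_def, map_pow, map_neg, map_one]
    ring
  have h2 := congrArg (transfer G) h1
  simp only [map_sum, map_smul, transfer_transfer_mul, map_zero] at h2
  rw [← h2]
  refine Finset.sum_congr rfl fun t _ => ?_
  simp [Algebra.smul_def]

/-- A multi-exponent of degree at least `|s|` contains a family of `|s|` variables indexed by `s`. -/
lemma exists_eq_add_sum_single {ι : Type*} [DecidableEq ι] (i₀ : Fin n) (s : Finset ι)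
    (μ : Fin n →₀ ℕ) (hs : s.card ≤ μ.degree) :
    ∃ (v : ι → Fin n) (ν : Fin n →₀ ℕ), μ = ν + ∑ a ∈ s, Finsupp.single (v a) 1 := by
  induction s using Finset.induction_on generalizing μ with
  | empty => exact ⟨fun _ => i₀, μ, by simp⟩
  | insert a s ha ih =>
    rw [Finset.card_insert_of_notMem ha] at hs
    obtain ⟨i, hi⟩ : ∃ i, μ i ≠ 0 := by
      by_contra! h
      have : μ = 0 := Finsupp.ext h
      simp [this] at hs
    have hμ : μ = (μ - Finsupp.single i 1) + Finsupp.single i 1 :=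
      (tsub_add_cancel_of_le (Finsupp.single_le_iff.2 (Nat.one_le_iff_ne_zero.2 hi))).symm
    have hd := congrArg Finsupp.degree hμ
    rw [map_add, Finsupp.degree_single] at hd
    obtain ⟨v, ν, h⟩ := ih (μ - Finsupp.single i 1) (by omega)
    refine ⟨Function.update v a i, ν, ?_⟩
    rw [Finset.sum_insert ha, Function.update_self]
    have : ∑ b ∈ s, Finsupp.single (Function.update v a i b) 1
        = ∑ b ∈ s, (Finsupp.single (v b) 1 : Fin n →₀ ℕ) :=
      Finset.sum_congr rfl fun b hb => by
        rw [Function.update_of_ne (by rintro rfl; exact ha hb)]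
    rw [this, add_left_comm, ← h, add_comm, ← hμ]

/-- A subalgebra containing the orbit sums of degree at most `d` contains the transfer of every
polynomial of degree at most `d`. -/
lemma transfer_mem_of_totalDegree_le (A : Subalgebra k (MvPolynomial (Fin n) k)) (d : ℕ)
    (hA : ∀ μ : Fin n →₀ ℕ, μ.degree ≤ d → orbitSum G μ ∈ A)
    (p : MvPolynomial (Fin n) k) (hp : p.totalDegree ≤ d) : transfer G p ∈ A := by
  rw [p.as_sum, map_sum]
  refine Subalgebra.sum_mem _ fun μ hμ => ?_
  have : monomial μ (p.coeff μ) = p.coeff μ • monomial μ (1 : k) := by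
    rw [smul_monomial, smul_eq_mul, mul_one]
  rw [this, map_smul, transfer_monomial]
  exact A.smul_mem (hA μ ((le_totalDegree hμ).trans hp)) _

lemma totalDegree_glAct_X_le (g : GL (Fin n) k) (i : Fin n) :
    (glAct g (X i)).totalDegree ≤ 1 := by
  rw [glAct, aeval_X]
  refine totalDegree_finsetSum_le fun j _ => (totalDegree_mul _ _).trans ?_
  simp

/-- A subalgebra containing the orbit sums of degree at most `|G|` contains all of them. -/
lemma orbitSum_mem [CharZero k] (hn : 1 ≤ n) (A : Subalgebra k (MvPolynomial (Fin n) k))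
    (hA : ∀ μ : Fin n →₀ ℕ, μ.degree ≤ Fintype.card G → orbitSum G μ ∈ A)
    (μ : Fin n →₀ ℕ) : orbitSum G μ ∈ A := by
  classical
  induction hd : μ.degree using Nat.strong_induction_on generalizing μ with
  | _ d ih =>
  by_cases hle : μ.degree ≤ Fintype.card G
  · exact hA μ hle
  obtain ⟨v, ν, hμ⟩ := exists_eq_add_sum_single ⟨0, hn⟩ (Finset.univ : Finset G) μ
    (by rw [Finset.card_univ]; omega)
  have hmon : ∀ s : Finset G, monomial ν (1 : k) * ∏ σ ∈ s, X (v σ)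
      = monomial (ν + ∑ σ ∈ s, Finsupp.single (v σ) 1) 1 := fun s => by
    simp only [X, ← monomial_sum_one, monomial_mul, mul_one]
  have hb := transfer_benson G (monomial ν (1 : k)) fun σ => X (v σ)
  rw [← Finset.add_sum_erase _ _ (Finset.empty_mem_powerset _)] at hb
  simp only [hmon, transfer_monomial, Finset.sdiff_empty, ← hμ, Finset.card_empty, pow_zero,
    one_mul, Finset.prod_empty] at hb
  rw [transfer_of_invariant G 1 fun σ _ => map_one _, mul_smul_comm, mul_one] at hb
  have hcard : (Fintype.card G : k) ≠ 0 := Nat.cast_ne_zero.2 Fintype.card_ne_zero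
  have hmem : (Fintype.card G : k) • orbitSum G μ ∈ A := by
    rw [eq_neg_of_add_eq_zero_left hb]
    refine A.neg_mem (A.sum_mem fun t ht => A.mul_mem (A.pow_mem (A.neg_mem A.one_mem) _)
      (A.mul_mem ?_ ?_))
    · refine ih _ ?_ _ rfl
      -- `t` is nonempty, so fewer than `|G|` of the variables `X (v σ)` survive.
      have hlt : (Finset.univ \ t).card < (Finset.univ : Finset G).card := by
        refine Finset.card_lt_card (Finset.sdiff_ssubset (Finset.subset_univ t) ?_)
        exact Finset.nonempty_iff_ne_empty.2 (Finset.ne_of_mem_erase ht)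
      rw [← hd, hμ]
      simpa only [map_add, map_sum, Finsupp.degree_single, Finset.sum_const, smul_eq_mul,
        mul_one, add_lt_add_iff_left] using hlt
    · refine transfer_mem_of_totalDegree_le G A _ hA _ ?_
      refine (totalDegree_finsetProd _ _).trans ?_
      refine (Finset.sum_le_card_nsmul _ _ 1 fun σ _ => totalDegree_glAct_X_le _ _).trans ?_
      simpa using Finset.card_le_univ t
  simpa [smul_smul, inv_mul_cancel₀ hcard] using A.smul_mem hmem (Fintype.card G : k)⁻¹

end Noether

/-- Noether's theorem on orbit sums: every `G`-invariant polynomial lies in the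
`k`-subalgebra generated by the orbit sums `J_μ` with `μ₁ + ⋯ + μₙ ≤ h`, where
`h` is the order of the group. -/
theorem invariant_mem_adjoin_orbitSums
    {k : Type*} [Field k] [CharZero k] {n : ℕ} (hn : 1 ≤ n)
    (G : Subgroup (GL (Fin n) k)) [Fintype G] (h : ℕ) (hcard : Fintype.card G = h)
    (f : MvPolynomial (Fin n) k) (hf : ∀ σ ∈ G, glAct σ f = f) :
    f ∈ Algebra.adjoin k
      {p : MvPolynomial (Fin n) k |
        ∃ μ : Fin n →₀ ℕ, (∑ i, μ i) ≤ h ∧ p = orbitSum G μ} := by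
  subst hcard
  set A := Algebra.adjoin k {p : MvPolynomial (Fin n) k |
    ∃ μ : Fin n →₀ ℕ, (∑ i, μ i) ≤ Fintype.card G ∧ p = orbitSum G μ}
  have hA : ∀ μ : Fin n →₀ ℕ, orbitSum G μ ∈ A :=
    orbitSum_mem G hn A fun μ hμ =>
      Algebra.subset_adjoin ⟨μ, by rwa [← Finsupp.degree_eq_sum], rfl⟩
  have hne : (Fintype.card G : k) ≠ 0 := Nat.cast_ne_zero.2 Fintype.card_ne_zero
  have hmem := transfer_mem_of_totalDegree_le G A _ (fun μ _ => hA μ) f le_rfl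
  rw [transfer_of_invariant G f hf] at hmem
  simpa [smul_smul, inv_mul_cancel₀ hne] using A.smul_mem hmem (Fintype.card G : k)⁻¹
end

section
/- Noether's degree bound: the invariant ring k[x₁,…,xₙ]^G is generated as a k-algebra by its elements of degree at most h, the order of the group; i.e. every G-invariant polynomial has an integral rational (polynomial) expression in terms of G-invariant polynomials whose total degree in x₁,…,xₙ does not exceed h. -/
/-!
The argument is Benson's. For variables `y τ` indexed by `τ ∈ G` and for each `σ ∈ G`, the product
`∏ τ, (σ (τ (y τ)) - y τ)` vanishes, because one of its factors has `σ ∘ τ = id`. Expanding this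
product and summing over `σ` expresses `|G| • ∏ τ, y τ` through products of the form
`(∑ σ, σ p) * ∏ τ ∈ Tᶜ, y τ` with `T` nonempty and `p` homogeneous of degree `|T| ≤ |G|`
(`card_mul_prod_eq`). Let `S` be the algebra generated by the invariants of degree at most `|G|`.
Since `|G|` is invertible in `k`, every monomial of degree at least `|G|` is an `S`-linear
combination of monomials of smaller degree, so `k[x₁,…,xₙ]` is spanned over `S` by the monomials of
degree less than `|G|` (`mem_lowSpan`). The trace `p ↦ ∑ σ, σ p` is `S`-linear and sends those
monomials to invariants of degree less than `|G|`; so it maps everything into `S`, and on an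
invariant it is multiplication by `|G|`.
-/

open MvPolynomial

namespace NoetherBound

variable {k : Type*} [Field k] {n : ℕ}

lemma glAct_X (g : GL (Fin n) k) (i : Fin n) :
    glAct g (X i) = ∑ j, C ((g : Matrix (Fin n) (Fin n) k) i j) * X j := by
  simp [glAct]

/-- Substitution makes `glAct` a right action, so the order of the factors is reversed. -/
lemma glAct_glAct (σ τ : GL (Fin n) k) (p : MvPolynomial (Fin n) k) :
    glAct σ (glAct τ p) = glAct (τ * σ) p := by
  have : (glAct σ).comp (glAct τ) = glAct (τ * σ) := by
    refine MvPolynomial.algHom_ext fun i => ?_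
    rw [AlgHom.comp_apply, glAct_X, glAct_X, map_sum]
    simp_rw [map_mul, glAct_X, Units.val_mul, Matrix.mul_apply, map_sum, Finset.sum_mul,
      Finset.mul_sum]
    rw [Finset.sum_comm]
    refine Finset.sum_congr rfl fun j _ => Finset.sum_congr rfl fun l _ => ?_
    rw [← algebraMap_eq, AlgHom.commutes, map_mul, mul_assoc]
  exact DFunLike.congr_fun this p

lemma glAct_one (p : MvPolynomial (Fin n) k) : glAct (1 : GL (Fin n) k) p = p := by
  have : glAct (1 : GL (Fin n) k) = AlgHom.id k _ := by
    refine MvPolynomial.algHom_ext fun i => ?_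
    rw [glAct_X]
    simp [Matrix.one_apply]
  rw [this, AlgHom.id_apply]

lemma totalDegree_glAct_X_le (g : GL (Fin n) k) (i : Fin n) :
    (glAct g (X i)).totalDegree ≤ 1 := by
  rw [glAct_X]
  refine totalDegree_finsetSum_le fun j _ => (totalDegree_mul _ _).trans ?_
  simp

lemma totalDegree_multiset_prod_map_le {ι : Type*} (s : Multiset ι)
    (F : ι → MvPolynomial (Fin n) k) (hF : ∀ i, (F i).totalDegree ≤ 1) :
    (s.map F).prod.totalDegree ≤ s.card := by
  induction s using Multiset.induction_on with
  | empty => simp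
  | cons a s ih =>
    rw [Multiset.map_cons, Multiset.prod_cons, Multiset.card_cons]
    refine (totalDegree_mul _ _).trans ?_
    have := hF a
    omega

variable (G : Subgroup (GL (Fin n) k)) [Fintype G]

/-- The unnormalised Reynolds operator `p ↦ ∑ σ ∈ G, σ p`. -/
noncomputable def trace : MvPolynomial (Fin n) k →ₗ[k] MvPolynomial (Fin n) k :=
  ∑ σ : G, (glAct (σ : GL (Fin n) k)).toLinearMap

lemma trace_apply (p : MvPolynomial (Fin n) k) :
    trace G p = ∑ σ : G, glAct (σ : GL (Fin n) k) p := by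
  simp [trace]

lemma glAct_trace (p : MvPolynomial (Fin n) k) (ρ : GL (Fin n) k) (hρ : ρ ∈ G) :
    glAct ρ (trace G p) = trace G p := by
  rw [trace_apply, map_sum]
  simp_rw [glAct_glAct]
  exact Fintype.sum_equiv (Equiv.mulRight (⟨ρ, hρ⟩ : G)) _ _ fun σ => rfl

/-- The subalgebra generated by the invariants of degree at most `|G|`. -/
noncomputable def lowAlg : Subalgebra k (MvPolynomial (Fin n) k) :=
  Algebra.adjoin k {p : MvPolynomial (Fin n) k |
    (∀ σ ∈ G, glAct σ p = p) ∧ p.totalDegree ≤ Fintype.card G}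

lemma glAct_of_mem_lowAlg {p : MvPolynomial (Fin n) k} (hp : p ∈ lowAlg G)
    (σ : GL (Fin n) k) (hσ : σ ∈ G) : glAct σ p = p := by
  have : lowAlg G ≤ AlgHom.equalizer (glAct σ) (AlgHom.id k _) :=
    Algebra.adjoin_le fun q hq => hq.1 σ hσ
  exact this hp

/-- The trace of a product of at most `|G|` transformed variables is an invariant of degree at most
`|G|`. With `τ = 1` this is the trace of a monomial; the general form is what Benson's identity
produces. -/
lemma trace_prod_mem_lowAlg {ι : Type*} (s : Multiset ι) (τ : ι → GL (Fin n) k) (y : ι → Fin n)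
    (hs : s.card ≤ Fintype.card G) :
    trace G (s.map fun i => glAct (τ i) (X (y i))).prod ∈ lowAlg G := by
  refine Algebra.subset_adjoin ⟨glAct_trace G _, ?_⟩
  rw [trace_apply]
  refine totalDegree_finsetSum_le fun σ _ => ?_
  rw [map_multiset_prod, Multiset.map_map]
  refine (totalDegree_multiset_prod_map_le s _ fun i => ?_).trans hs
  rw [Function.comp_apply, glAct_glAct]
  exact totalDegree_glAct_X_le _ _

/-- The `lowAlg G`-submodule spanned by the monomials of degree less than `|G|`; a monomial is
written as the product of the variables in a multiset of indices. -/
noncomputable def lowSpan : Submodule (lowAlg G) (MvPolynomial (Fin n) k) :=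
  Submodule.span (lowAlg G)
    {p | ∃ s : Multiset (Fin n), s.card < Fintype.card G ∧ p = (s.map X).prod}

/-- Benson's identity: `∑ σ, ∏ τ, (σ (τ (y τ)) - y τ) = 0`, solved for the term that contains
no conjugated variable. -/
lemma card_mul_prod_eq (y : G → Fin n) [DecidableEq G] :
    (Fintype.card G : MvPolynomial (Fin n) k) * ∏ τ : G, -X (y τ) =
      -∑ T ∈ (Finset.univ : Finset G).powerset.erase ∅,
        trace G (∏ τ ∈ T, glAct (τ : GL (Fin n) k) (X (y τ))) *
          ∏ τ ∈ Finset.univ \ T, -X (y τ) := by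
  have hzero : ∀ σ : G, ∏ τ : G, (glAct (σ : GL (Fin n) k)
      (glAct (τ : GL (Fin n) k) (X (y τ))) + -X (y τ)) = 0 := fun σ => by
    refine Finset.prod_eq_zero (Finset.mem_univ σ⁻¹) ?_
    rw [glAct_glAct, Subgroup.coe_inv, inv_mul_cancel, glAct_one, add_neg_cancel]
  have hsum := Finset.sum_eq_zero fun σ (_ : σ ∈ (Finset.univ : Finset G)) => hzero σ
  simp_rw [Finset.prod_add, ← map_prod] at hsum
  rw [Finset.sum_comm] at hsum
  simp_rw [← Finset.sum_mul, ← trace_apply] at hsum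
  rw [← Finset.add_sum_erase _ _ (Finset.empty_mem_powerset _)] at hsum
  rw [← eq_neg_iff_add_eq_zero] at hsum
  rw [← hsum]
  simp [trace_apply]

lemma exists_map_univ_eq {ι α : Type*} [Fintype ι] (t : Multiset α)
    (ht : t.card = Fintype.card ι) :
    ∃ y : ι → α, (Finset.univ : Finset ι).val.map y = t := by
  induction t using Quotient.inductionOn with
  | h l =>
    have hl : l.length = Fintype.card ι := by simpa using ht
    let e : ι ≃ Fin l.length := (Fintype.equivFin ι).trans (finCongr hl.symm)
    refine ⟨l.get ∘ e, ?_⟩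
    rw [← Multiset.map_map]
    have : (Finset.univ : Finset ι).val.map e = (Finset.univ : Finset (Fin l.length)).val := by
      simp
    rw [this]
    simp [Fin.univ_def]

lemma smul_mem_lowSpan (c : k) {p : MvPolynomial (Fin n) k} (hp : p ∈ lowSpan G) :
    c • p ∈ lowSpan G :=
  Submodule.smul_of_tower_mem _ c hp

variable [CharZero k]

/-- A monomial of degree at least `|G|` is reduced by applying Benson's identity to a factor of
degree exactly `|G|`. -/
lemma monomial_mem_lowSpan (s : Multiset (Fin n)) :
    (s.map (X : Fin n → MvPolynomial (Fin n) k)).prod ∈ lowSpan G := by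
  classical
  induction hd : s.card using Nat.strong_induction_on generalizing s with
  | _ d ih =>
    by_cases hlt : s.card < Fintype.card G
    · exact Submodule.subset_span ⟨s, hlt, rfl⟩
    have hpos : 0 < (Multiset.powersetCard (Fintype.card G) s).card := by
      rw [Multiset.card_powersetCard]
      exact Nat.choose_pos (not_lt.mp hlt)
    obtain ⟨t, ht⟩ := Multiset.card_pos_iff_exists_mem.mp hpos
    obtain ⟨hts, htc⟩ := Multiset.mem_powersetCard.mp ht
    obtain ⟨u, rfl⟩ := Multiset.le_iff_exists_add.mp hts
    obtain ⟨y, hy⟩ := exists_map_univ_eq (ι := G) t htc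
    have hprod : (t.map (X : Fin n → MvPolynomial (Fin n) k)).prod = ∏ τ : G, X (y τ) := by
      rw [← hy, Multiset.map_map]; rfl
    have key := congrArg (· * (u.map (X : Fin n → MvPolynomial (Fin n) k)).prod)
      (card_mul_prod_eq G y)
    simp only [Finset.prod_neg] at key
    have hmem : (Fintype.card G : MvPolynomial (Fin n) k) *
        ((-1) ^ (Finset.univ : Finset G).card * ∏ τ : G, X (y τ)) *
        (u.map (X : Fin n → MvPolynomial (Fin n) k)).prod ∈ lowSpan G := by
      rw [key, neg_mul, Finset.sum_mul]
      refine Submodule.neg_mem _ (Submodule.sum_mem _ fun T hT => ?_)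
      have hT0 : 0 < T.card := Finset.card_pos.mpr
        (Finset.nonempty_iff_ne_empty.mpr (Finset.ne_of_mem_erase hT))
      have hcard : (Finset.univ \ T).card + T.card = Fintype.card G :=
        Finset.card_sdiff_add_card_eq_card (Finset.subset_univ T)
      have hlow := ih _ (by
        rw [← hd, Multiset.card_add, Multiset.card_add, Multiset.card_map, htc, ← hcard]
        change (Finset.univ \ T).card + _ < _
        omega) ((Finset.univ \ T).val.map y + u) rfl
      have htr : trace G (∏ τ ∈ T, glAct (τ : GL (Fin n) k) (X (y τ))) ∈ lowAlg G :=
        trace_prod_mem_lowAlg G T.val (fun τ => (τ : GL (Fin n) k)) y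
          (Finset.card_le_univ T)
      have hres := Submodule.smul_mem _ (⟨_, htr⟩ * (-1) ^ (Finset.univ \ T).card : lowAlg G) hlow
      rw [Multiset.map_add, Multiset.prod_add, Multiset.map_map] at hres
      convert hres using 1
      rw [Subalgebra.smul_def]
      simp only [smul_eq_mul, Subalgebra.coe_mul, Subalgebra.coe_pow, Subalgebra.coe_neg,
        Subalgebra.coe_one, Finset.prod, Function.comp_def]
      ring
    have hc : (Fintype.card G : k) * (-1) ^ (Finset.univ : Finset G).card ≠ 0 :=
      mul_ne_zero (Nat.cast_ne_zero.mpr Fintype.card_ne_zero) (pow_ne_zero _ (by simp))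
    have := smul_mem_lowSpan G
      ((Fintype.card G : k) * (-1) ^ (Finset.univ : Finset G).card)⁻¹ hmem
    convert this using 1
    rw [eq_inv_smul_iff₀ hc, Multiset.map_add, Multiset.prod_add, hprod, smul_eq_C_mul]
    simp only [map_mul, map_natCast, map_pow, map_neg, map_one]
    ring

lemma mem_lowSpan (p : MvPolynomial (Fin n) k) : p ∈ lowSpan G := by
  rw [p.as_sum]
  refine Submodule.sum_mem _ fun m _ => ?_
  have hm := smul_mem_lowSpan G (p.coeff m) (monomial_mem_lowSpan G m.toMultiset)
  convert hm using 1
  rw [monomial_eq, smul_eq_C_mul, Finsupp.toMultiset_map, Finsupp.prod_toMultiset,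
    Finsupp.prod_mapDomain_index (by simp) (by simp [pow_add])]

lemma trace_mem_lowAlg (p : MvPolynomial (Fin n) k) : trace G p ∈ lowAlg G := by
  refine Submodule.span_induction (p := fun q _ => trace G q ∈ lowAlg G) ?_ ?_ ?_ ?_
    (mem_lowSpan G p)
  · rintro _ ⟨s, hs, rfl⟩
    have := trace_prod_mem_lowAlg G s (fun _ => 1) id hs.le
    simpa only [glAct_one, id] using this
  · rw [map_zero]; exact zero_mem _
  · intro q r _ _ hq hr
    rw [map_add]; exact add_mem hq hr
  · intro s q _ hq
    have : trace G (s • q) = s * trace G q := by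
      rw [Subalgebra.smul_def, smul_eq_mul, trace_apply, trace_apply, Finset.mul_sum]
      refine Finset.sum_congr rfl fun σ _ => ?_
      rw [map_mul, glAct_of_mem_lowAlg G s.2 σ σ.2]
    rw [this]
    exact mul_mem s.2 hq

end NoetherBound

/-- Noether's degree bound: every `G`-invariant polynomial lies in the `k`-subalgebra
generated by the `G`-invariant polynomials of total degree at most `h`, the order of
the group. -/
theorem invariant_mem_adjoin_low_degree_invariants
    {k : Type*} [Field k] [CharZero k] {n : ℕ} (hn : 1 ≤ n)
    (G : Subgroup (GL (Fin n) k)) [Fintype G] (h : ℕ) (hcard : Fintype.card G = h)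
    (f : MvPolynomial (Fin n) k) (hf : ∀ σ ∈ G, glAct σ f = f) :
    f ∈ Algebra.adjoin k
      {p : MvPolynomial (Fin n) k |
        (∀ σ ∈ G, glAct σ p = p) ∧ p.totalDegree ≤ h} := by
  subst hcard
  have htr : NoetherBound.trace G f = (Fintype.card G : k) • f := by
    rw [NoetherBound.trace_apply, Finset.sum_congr rfl fun (σ : G) _ => hf σ σ.2]
    simp [smul_eq_C_mul]
  have hmem := Subalgebra.smul_mem _ (NoetherBound.trace_mem_lowAlg G f)
    (Fintype.card G : k)⁻¹
  rwa [htr, inv_smul_smul₀ (Nat.cast_ne_zero.mpr Fintype.card_ne_zero)] at hmem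
end

section
/- The field of rational invariants is rationally generated by the coefficients of the Galois resolvent: every G-invariant element of k(x₁,…,xₙ) lies in the subfield of k(x₁,…,xₙ) generated over k by the coefficients G_{α,α₁,…,αₙ}(x) of the Galois resolvent Φ(z,u); i.e. k(x₁,…,xₙ)^G = k(G_{α,α₁,…,αₙ}(x) : all α, α₁,…,αₙ). -/
/-!
Let `L` be the field generated by the coefficients of `Φ`. Acting by `σ ∈ G` permutes the factors
of `Φ`, so its coefficients are invariant and `L ⊆ K^G` (`map_glAct_galoisResolvent`).

Conversely, specialising `z` to `X`, `uⱼ` to `-1` and the other `uᵢ` to `0` turns `Φ` into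
`∏ (X - g•xⱼ)`, a polynomial over `L` that splits in `K` and has `xⱼ` as a root
(`isIntegral_and_splits`). As the `xⱼ` generate `K` over `L` and the characteristic is zero, `K / L`
is Galois. An automorphism `τ` of `K` over `L` fixes `Φ`, hence, comparing linear factors
(`exists_eq_of_prod_linear_eq`), there is `g ∈ G` with `τ xᵢ = g•xᵢ` for all `i` simultaneously,
i.e. `τ` is the action of `g`. So a `G`-invariant element is fixed by all of `Gal(K / L)` and lies
in `L`.
-/

open MvPolynomial

/-- Acting by `σ` on the coefficients of the resolvent only permutes its factors, through `g ↦ g * σ`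
(`glAct` is an anti-homomorphism in `g`). -/
theorem map_glAct_galoisResolvent {k : Type*} [Field k] {n : ℕ}
    (G : Subgroup (GL (Fin n) k)) [Fintype G] (σ : G) :
    map (glAct (σ : GL (Fin n) k)).toRingHom (galoisResolvent G) = galoisResolvent G := by
  have hmul : ∀ (g : GL (Fin n) k) (i : Fin n),
      glAct (σ : GL (Fin n) k) (glAct g (X i)) = glAct (g * (σ : GL (Fin n) k)) (X i) := by
    intro g i
    simp only [glAct, aeval_X, map_sum, map_mul, algHom_C, algebraMap_eq, Units.val_mul,
      Matrix.mul_apply, Finset.mul_sum, Finset.sum_mul]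
    rw [Finset.sum_comm]
    simp only [mul_assoc]
  unfold galoisResolvent
  rw [map_prod]
  refine Fintype.prod_equiv (Equiv.mulRight σ) _ _ fun g => ?_
  simp [hmul]

theorem glAct_one_X {k : Type*} [Field k] {n : ℕ} (i : Fin n) :
    glAct (1 : GL (Fin n) k) (X i) = X i := by
  simp [glAct, Matrix.one_apply]

/-- If two products of linear forms `z + ∑ uᵢ·aᵢ` agree, every factor of one occurs in the other:
evaluate at `z = -∑ uᵢ·bᵢ` and use that `K[u]` is a domain. -/
theorem exists_eq_of_prod_linear_eq {K ι : Type*} [Field K] [Fintype ι] {n : ℕ}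
    (a b : ι → Fin n → K)
    (hab : ∏ g, ((X none : MvPolynomial (Option (Fin n)) K) + ∑ i, C (a g i) * X (some i)) =
      ∏ g, (X none + ∑ i, C (b g i) * X (some i))) (g₀ : ι) :
    ∃ g, a g = b g₀ := by
  classical
  let ev : MvPolynomial (Option (Fin n)) K →ₐ[K] MvPolynomial (Fin n) K :=
    aeval fun o => o.elim (-∑ i, C (b g₀ i) * X i) X
  have h0 := congrArg ev hab
  rw [map_prod, map_prod] at h0
  rw [Finset.prod_eq_zero (f := fun g => ev (X none + ∑ i, C (b g i) * X (some i)))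
    (Finset.mem_univ g₀) (by simp [ev])] at h0
  obtain ⟨g, -, hg⟩ := Finset.prod_eq_zero_iff.1 h0
  refine ⟨g, funext fun j => ?_⟩
  have hc := congrArg (coeff (Finsupp.single j 1)) hg
  simp only [ev, map_add, map_sum, map_mul, aeval_X, Option.elim, algHom_C, algebraMap_eq,
    coeff_add, coeff_neg, coeff_sum, coeff_C_mul, coeff_X, coeff_zero] at hc
  simp [Finsupp.single_left_inj] at hc
  linear_combination hc

/-- If the coefficients of `∏ (z + ∑ uᵢ·aᵢ)` lie in a subfield `L`, then each `a g j` is integral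
over `L` with minimal polynomial split in `K`: specialising `z = X`, `uᵢ = -δᵢⱼ` yields the
polynomial `∏ (X - a g j)` over `L`. -/
theorem isIntegral_and_splits {k K ι : Type*} [Field k] [Field K] [Algebra k K] [Fintype ι]
    {n : ℕ} (a : ι → Fin n → K) (L : IntermediateField k K)
    (Ψ : MvPolynomial (Option (Fin n)) L)
    (hΨ : map (algebraMap L K) Ψ = ∏ g, (X none + ∑ i, C (a g i) * X (some i)))
    (g₀ : ι) (j : Fin n) :
    IsIntegral L (a g₀ j) ∧ ((minpoly L (a g₀ j)).map (algebraMap L K)).Splits := by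
  classical
  let s : ∀ (R : Type _) [CommRing R], Option (Fin n) → Polynomial R := fun R _ o =>
    o.elim Polynomial.X fun i => if i = j then -1 else 0
  let p : Polynomial L := aeval (s L) Ψ
  have hp : p.map (algebraMap L K) = ∏ g, (Polynomial.X - Polynomial.C (a g j)) := by
    have h1 : p.map (algebraMap L K) = aeval (s K) (map (algebraMap L K) Ψ) := by
      simp only [p, aeval_def, eval₂_map]
      rw [← Polynomial.coe_mapRingHom, hom_eval₂]
      congr 1
      · ext x; simp
      · funext o
        cases o with
        | none => simp [s]
        | some i => by_cases h : i = j <;> simp [s, h]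
    rw [h1, hΨ, map_prod]
    refine Finset.prod_congr rfl fun g _ => ?_
    simp [s, sub_eq_add_neg]
  have hmon : p.Monic := by
    refine Polynomial.monic_of_injective (algebraMap L K).injective ?_
    rw [hp]
    exact Polynomial.monic_prod_of_monic _ _ fun g _ => Polynomial.monic_X_sub_C _
  have hroot : Polynomial.aeval (a g₀ j) p = 0 := by
    rw [← Polynomial.eval_map_algebraMap, hp, Polynomial.eval_prod]
    exact Finset.prod_eq_zero (Finset.mem_univ g₀) (by simp)
  refine ⟨⟨p, hmon, hroot⟩, ?_⟩
  refine Polynomial.Splits.of_dvd (g := p.map (algebraMap L K)) ?_ (hmon.map _).ne_zero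
    (Polynomial.map_dvd _ (minpoly.dvd _ _ hroot))
  rw [hp]
  exact Polynomial.Splits.prod fun g _ => Polynomial.Splits.X_sub_C _

/-- A subfield of the rational function field containing the constants and the `xᵢ` is everything. -/
theorem mem_of_algebraMap_X_mem {k : Type*} [Field k] {n : ℕ}
    {K : Type*} [Field K] [Algebra (MvPolynomial (Fin n) k) K]
    [IsFractionRing (MvPolynomial (Fin n) k) K]
    [Algebra k K] [IsScalarTower k (MvPolynomial (Fin n) k) K]
    (E : IntermediateField k K)
    (hE : ∀ i, algebraMap (MvPolynomial (Fin n) k) K (X i) ∈ E) (ω : K) : ω ∈ E := by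
  have hpoly : ∀ r, algebraMap (MvPolynomial (Fin n) k) K r ∈ E := by
    intro r
    induction r using MvPolynomial.induction_on with
    | C c =>
      rw [← algebraMap_eq, ← IsScalarTower.algebraMap_apply]
      exact E.algebraMap_mem c
    | add p q hp hq => rw [map_add]; exact E.add_mem hp hq
    | mul_X p i hp => rw [map_mul]; exact E.mul_mem hp (hE i)
  obtain ⟨x, y, -, rfl⟩ := IsFractionRing.div_surjective (MvPolynomial (Fin n) k) ω
  exact E.div_mem (hpoly x) (hpoly y)

/-- An extension generated by integral elements with split minimal polynomials is normal. -/
theorem normal_of_forall_mem_adjoin {L K : Type*} [Field L] [Field K] [Algebra L K] {S : Set K}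
    (hgen : ∀ x : K, x ∈ IntermediateField.adjoin L S)
    (hS : ∀ x ∈ S, IsIntegral L x ∧ ((minpoly L x).map (algebraMap L K)).Splits) :
    Normal L K := by
  have halg := IntermediateField.isAlgebraic_adjoin fun x h => (hS x h).1
  refine normal_iff.2 fun x => ⟨?_, IntermediateField.splits_of_mem_adjoin L K hS (hgen x)⟩
  exact (IntermediateField.isAlgebraic_iff.1 (halg.isAlgebraic ⟨x, hgen x⟩)).isIntegral

/-- The field of rational invariants is rationally generated by the coefficients of
the Galois resolvent: the `G`-fixed subfield of `K = k(x₁,…,xₙ)` is exactly the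
subfield generated over `k` by the coefficients `G_{α,α₁,…,αₙ}(x)` of `Φ(z,u)`. -/
theorem fixedField_eq_adjoin_galoisResolvent_coeffs
    {k : Type*} [Field k] [CharZero k] {n : ℕ} (hn : 1 ≤ n)
    (G : Subgroup (GL (Fin n) k)) [Fintype G] (h : ℕ) (hcard : Fintype.card G = h)
    (K : Type*) [Field K] [Algebra (MvPolynomial (Fin n) k) K]
    [IsFractionRing (MvPolynomial (Fin n) k) K]
    [Algebra k K] [IsScalarTower k (MvPolynomial (Fin n) k) K]
    -- the action of `G` on the fraction field `K = k(x₁,…,xₙ)`,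
    -- extending the action on the polynomial ring:
    (ext : G → (K ≃ₐ[k] K))
    (hext : ∀ σ : G, ∀ r : MvPolynomial (Fin n) k,
      ext σ (algebraMap (MvPolynomial (Fin n) k) K r) =
        algebraMap (MvPolynomial (Fin n) k) K (glAct (σ : GL (Fin n) k) r)) :
    {ω : K | ∀ σ : G, ext σ ω = ω} =
      (IntermediateField.adjoin k
        {y : K | ∃ d : Option (Fin n) →₀ ℕ,
          y = algebraMap (MvPolynomial (Fin n) k) K
                (coeff d (galoisResolvent G))} : Set K) := by
  set A := MvPolynomial (Fin n) k
  set L : IntermediateField k K := IntermediateField.adjoin k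
    {y : K | ∃ d : Option (Fin n) →₀ ℕ, y = algebraMap A K (coeff d (galoisResolvent G))} with hL
  let a : G → Fin n → K := fun g i => algebraMap A K (glAct (g : GL (Fin n) k) (X i))
  have ha1 : ∀ i, a 1 i = algebraMap A K (X i) := fun i => by simp [a, glAct_one_X]
  have hΦ : map (algebraMap A K) (galoisResolvent G) =
      ∏ g, (X none + ∑ i, C (a g i) * X (some i)) := by
    simp [galoisResolvent, a, map_prod]
  apply Set.Subset.antisymm
  · intro ω hω
    obtain ⟨Ψ, hΨ⟩ : map (algebraMap A K) (galoisResolvent G) ∈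
        Set.range (map (σ := Option (Fin n)) (algebraMap L K)) := by
      rw [mem_range_map_iff_coeffs_subset]
      intro y hy
      obtain ⟨d, -, rfl⟩ := mem_coeffs_iff.1 hy
      rw [coeff_map]
      exact ⟨⟨_, IntermediateField.subset_adjoin _ _ ⟨d, rfl⟩⟩, rfl⟩
    have hgen : ∀ x : K, x ∈ IntermediateField.adjoin L (Set.range (a 1)) := by
      intro x
      rw [← IntermediateField.mem_restrictScalars k]
      refine mem_of_algebraMap_X_mem (n := n) _ (fun i => ?_) x
      rw [← ha1, IntermediateField.mem_restrictScalars]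
      exact IntermediateField.subset_adjoin L (Set.range (a 1)) (Set.mem_range_self i)
    have hx : ∀ x ∈ Set.range (a 1), IsIntegral L x ∧
        ((minpoly L x).map (algebraMap L K)).Splits := by
      rintro _ ⟨i, rfl⟩
      exact isIntegral_and_splits a L Ψ (hΨ.trans hΦ) 1 i
    have hnormal : Normal L K := normal_of_forall_mem_adjoin hgen hx
    have : IsGalois L K := {}
    have hωL : ω ∈ (⊥ : IntermediateField L K) := by
      rw [InfiniteGalois.mem_bot_iff_fixed]
      intro τ
      -- `τ` fixes the resolvent, so it permutes its linear factors; the image of the factor of the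
      -- identity names the `g` with `τ = ext g`.
      have hτ : map (τ : K →+* K) (map (algebraMap L K) Ψ) = map (algebraMap L K) Ψ := by
        rw [map_map]
        congr 2
        ext x
        exact τ.commutes x
      rw [hΨ, hΦ, map_prod] at hτ
      obtain ⟨g, hg⟩ := exists_eq_of_prod_linear_eq a (fun g i => τ (a g i))
        (by rw [← hτ]; simp) 1
      let E : IntermediateField k K :=
        (AlgHom.equalizer (τ.restrictScalars k : K →ₐ[k] K)
          (ext g : K →ₐ[k] K)).toIntermediateField
          fun x hx => by
            simp only [AlgHom.mem_equalizer, map_inv₀] at hx ⊢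
            rw [hx]
      have hE : ω ∈ E := by
        refine mem_of_algebraMap_X_mem (n := n) E (fun i => ?_) ω
        change τ (algebraMap A K (X i)) = ext g (algebraMap A K (X i))
        rw [hext, ← ha1 i]
        exact (congrFun hg i).symm
      exact (show τ ω = ext g ω from hE).trans (hω g)
    obtain ⟨y, rfl⟩ := IntermediateField.mem_bot.1 hωL
    exact y.2
  · intro ω hω σ
    let F : IntermediateField k K :=
      (AlgHom.equalizer (ext σ : K →ₐ[k] K) (AlgHom.id k K)).toIntermediateField
        fun x hx => by
          simp only [AlgHom.mem_equalizer, map_inv₀] at hx ⊢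
          rw [hx]
    have hLF : L ≤ F := by
      rw [hL, IntermediateField.adjoin_le_iff]
      rintro _ ⟨d, rfl⟩
      change ext σ _ = _
      have h1 := congrArg (coeff d) (map_glAct_galoisResolvent G σ)
      rw [coeff_map] at h1
      rw [hext]
      exact congrArg (algebraMap A K) h1
    exact hLF hω
end
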